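/- If G ∈ F₄(F₂, P₃∪K₂), then |V(G)| ≤ 8. Here P₃∪K₂ is the disjoint union of the path on 3 vertices and a single edge. -/

import Mathlib

/-!
Fix an induced copy of `P₃ ∪ K₂` in `G`, the core. Over `F₂` the core carries exactly three symmetric
matrices of rank at most 3 (`coreMat`), all of rank 3. A rank-3 matrix extending one of them is
determined by its columns in the core: the entry at `(u, w)` is `form i` of the core rows of `u` and
`w` (`exists_opt`, by vanishing of `4 × 4` minors). Hence `mr(G) ≤ 3` holds exactly when for some
option `i` there is no obstruction, where an obstruction is a single vertex outside the core with
incompatible core row, or a pair of such vertices with the wrong adjacency (`minRank_le`,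
`exists_good`).

If `mr(G) ≥ 4`, all three options are obstructed, and three vertices outside the core already
obstruct all of them (`exists_triple`). Indeed options 0 and 1 have the same incompatible vertices,
which settles the case where one of them exists. Otherwise options 0 and 1 differ exactly on pairs
of vertices adjacent to the end `0` of the path, so obstructions of the two can be chosen within a
pair or as two pairs sharing a vertex; and a pair obstructing option 0 obstructs option 2 too,
since either one of its vertices is incompatible with option 2 or the two forms agree on it. A
vertex outside the core and this triple could be deleted without lowering the minimum rank to 3, so `G` has at most `5 + 3` vertices.
-/

open Matrix

/-- `A` is a symmetric matrix over `F` whose off-diagonal nonzero pattern is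
given by the graph `G` (diagonal entries are unconstrained). -/
def IsGraphMatrix (F : Type*) [Field F] {V : Type*} (G : SimpleGraph V)
    (A : Matrix V V F) : Prop :=
  A.IsSymm ∧ ∀ i j : V, i ≠ j → (A i j ≠ 0 ↔ G.Adj i j)

/-- The minimum rank `mr(F, G)` of the graph `G` over the field `F`. -/
noncomputable def minRank (F : Type*) [Field F] {V : Type*} [Fintype V]
    (G : SimpleGraph V) : ℕ :=
  sInf {r : ℕ | ∃ A : Matrix V V F, IsGraphMatrix F G A ∧ A.rank = r}

/-- The graph `G - v` obtained from `G` by deleting the vertex `v`. -/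
def deleteVert {V : Type*} (G : SimpleGraph V) (v : V) : SimpleGraph {u : V // u ≠ v} :=
  SimpleGraph.comap Subtype.val G

/-- `G ∈ F_K(F, H)`: `G` contains `H` as an induced subgraph, `mr(F, G) ≥ K`, and for
some induced copy of `H` in `G` (an embedding `f : H ↪g G`), `mr(F, G - v) ≤ K - 1`
for every vertex `v` of `G` outside that copy. -/
def MemForbRel (F : Type*) [Field F] (K : ℕ) {VH VG : Type*} [Fintype VH] [Fintype VG]
    [DecidableEq VG] (H : SimpleGraph VH) (G : SimpleGraph VG) : Prop :=
  K ≤ minRank F G ∧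
    ∃ f : H ↪g G, ∀ v : VG, v ∉ Set.range f → minRank F (deleteVert G v) + 1 ≤ K

/-- `P₃ ∪ K₂`: the disjoint union of the path `0 - 1 - 2` and the edge `34`. -/
def P3unionK2 : SimpleGraph (Fin 5) :=
  SimpleGraph.fromEdgeSet {s(0,1), s(1,2), s(3,4)}

namespace P3K2

/-- The three symmetric rank-3 matrices over `F₂` with graph `P₃ ∪ K₂`. They share the all-ones
block on the edge `34` and differ in the diagonal on the path: `(0,0,0)`, `(0,1,0)`, `(1,0,1)`. -/
def coreMat : Fin 3 → Matrix (Fin 5) (Fin 5) (ZMod 2) :=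
  ![!![0, 1, 0, 0, 0; 1, 0, 1, 0, 0; 0, 1, 0, 0, 0; 0, 0, 0, 1, 1; 0, 0, 0, 1, 1],
    !![0, 1, 0, 0, 0; 1, 1, 1, 0, 0; 0, 1, 0, 0, 0; 0, 0, 0, 1, 1; 0, 0, 0, 1, 1],
    !![1, 1, 0, 0, 0; 1, 0, 1, 0, 0; 0, 1, 1, 0, 0; 0, 0, 0, 1, 1; 0, 0, 0, 1, 1]]

/-- Left factor of `form i`: the entries of `r` at the three core vertices whose principal
submatrix of `coreMat i` is invertible (`0, 1, 3` for `i = 0, 1`, and `0, 2, 3` for `i = 2`). -/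
def leftCoord (i : Fin 3) (r : Fin 5 → ZMod 2) : Fin 3 → ZMod 2 :=
  ![![r 0, r 1, r 3], ![r 0, r 1, r 3], ![r 0, r 2, r 3]] i

/-- Right factor of `form i`: the inverse of the chosen `3 × 3` principal submatrix of `coreMat i`,
applied to the corresponding entries of `s`. -/
def rightCoord (i : Fin 3) (s : Fin 5 → ZMod 2) : Fin 3 → ZMod 2 :=
  ![![s 1, s 0, s 3], ![s 1 + s 0, s 0, s 3], ![s 0, s 2, s 3]] i

/-- If a matrix of rank 3 has core block `coreMat i`, then the entry of that matrix at `(u, w)` is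
`form i r s`, where `r` and `s` are the rows of `u` and `w` restricted to the core. -/
def form (i : Fin 3) (r s : Fin 5 → ZMod 2) : ZMod 2 := leftCoord i r ⬝ᵥ rightCoord i s

/-- The vector `r` lies in the row space of `coreMat i`, expressed through `form i`: the entries
that `form i` predicts between `r` and the rows of the core are those of `r` itself. -/
def Compat (i : Fin 3) (r : Fin 5 → ZMod 2) : Prop := ∀ k, form i r (coreMat i k) = r k

instance decCompat (i : Fin 3) (r : Fin 5 → ZMod 2) : Decidable (Compat i r) := by
  unfold Compat; infer_instance

lemma form_zero (r s : Fin 5 → ZMod 2) : form 0 r s = r 0 * s 1 + r 1 * s 0 + r 3 * s 3 := by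
  simp [form, leftCoord, rightCoord, dotProduct, Fin.sum_univ_three]

lemma form_one (r s : Fin 5 → ZMod 2) :
    form 1 r s = r 0 * (s 1 + s 0) + r 1 * s 0 + r 3 * s 3 := by
  simp [form, leftCoord, rightCoord, dotProduct, Fin.sum_univ_three]

lemma form_two (r s : Fin 5 → ZMod 2) : form 2 r s = r 0 * s 0 + r 2 * s 2 + r 3 * s 3 := by
  simp [form, leftCoord, rightCoord, dotProduct, Fin.sum_univ_three]

lemma form_comm (i : Fin 3) (r s : Fin 5 → ZMod 2) : form i r s = form i s r := by
  fin_cases i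
  · simp only [Fin.zero_eta, form_zero]; ring
  · simp only [Fin.mk_one, form_one]; ring
  · simp only [Fin.reduceFinMk, form_two]; ring

lemma compat_coreMat (i : Fin 3) (k : Fin 5) : Compat i (coreMat i k) := by
  fin_cases i <;> fin_cases k <;> decide

lemma zmod2_cases (x : ZMod 2) : x = 0 ∨ x = 1 := by revert x; decide

lemma compat_zero_iff (r : Fin 5 → ZMod 2) : Compat 0 r ↔ r 2 = r 0 ∧ r 4 = r 3 := by
  simp [Compat, form_zero, coreMat, Fin.forall_fin_succ, @eq_comm _ (r 2), @eq_comm _ (r 4)]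

lemma compat_one_iff (r : Fin 5 → ZMod 2) : Compat 1 r ↔ r 2 = r 0 ∧ r 4 = r 3 := by
  simp only [Compat, form_one, coreMat, Fin.forall_fin_succ]
  simp
  generalize r 0 = a; generalize r 1 = b; generalize r 2 = c
  generalize r 3 = d; generalize r 4 = e
  revert a b c d e; decide

lemma compat_two_iff (r : Fin 5 → ZMod 2) :
    Compat 2 r ↔ r 0 + r 2 = r 1 ∧ r 4 = r 3 := by
  simp [Compat, form_two, coreMat, Fin.forall_fin_succ, eq_comm]

lemma det_fin_four {R : Type*} [CommRing R] (M : Matrix (Fin 4) (Fin 4) R) : M.det =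
    M 0 0 *
      (M 1 1 * (M 2 2 * M 3 3 - M 2 3 * M 3 2) - M 1 2 * (M 2 1 * M 3 3 - M 2 3 * M 3 1)
        + M 1 3 * (M 2 1 * M 3 2 - M 2 2 * M 3 1))
      - M 0 1 *
      (M 1 0 * (M 2 2 * M 3 3 - M 2 3 * M 3 2) - M 1 2 * (M 2 0 * M 3 3 - M 2 3 * M 3 0)
        + M 1 3 * (M 2 0 * M 3 2 - M 2 2 * M 3 0))
      + M 0 2 *
      (M 1 0 * (M 2 1 * M 3 3 - M 2 3 * M 3 1) - M 1 1 * (M 2 0 * M 3 3 - M 2 3 * M 3 0)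
        + M 1 3 * (M 2 0 * M 3 1 - M 2 1 * M 3 0))
      - M 0 3 *
      (M 1 0 * (M 2 1 * M 3 2 - M 2 2 * M 3 1) - M 1 1 * (M 2 0 * M 3 2 - M 2 2 * M 3 0)
        + M 1 2 * (M 2 0 * M 3 1 - M 2 1 * M 3 0)) := by
  simp [Matrix.det_succ_row_zero, Fin.sum_univ_succ, Fin.succAbove]
  ring

/-- The `4 × 4` minors of a matrix of rank at most 3 vanish; rows `xᵢ`, columns `yⱼ`, expanded. -/
lemma minor_eq_zero {ι : Type*} [Fintype ι] {A : Matrix ι ι (ZMod 2)} (hA : A.rank ≤ 3)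
    (x₀ x₁ x₂ x₃ y₀ y₁ y₂ y₃ : ι) :
    A x₀ y₀ *
      (A x₁ y₁ * (A x₂ y₂ * A x₃ y₃ - A x₂ y₃ * A x₃ y₂) - A x₁ y₂ * (A x₂ y₁ * A x₃ y₃ - A x₂ y₃ * A x₃ y₁)
        + A x₁ y₃ * (A x₂ y₁ * A x₃ y₂ - A x₂ y₂ * A x₃ y₁))
      - A x₀ y₁ *
      (A x₁ y₀ * (A x₂ y₂ * A x₃ y₃ - A x₂ y₃ * A x₃ y₂) - A x₁ y₂ * (A x₂ y₀ * A x₃ y₃ - A x₂ y₃ * A x₃ y₀)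
        + A x₁ y₃ * (A x₂ y₀ * A x₃ y₂ - A x₂ y₂ * A x₃ y₀))
      + A x₀ y₂ *
      (A x₁ y₀ * (A x₂ y₁ * A x₃ y₃ - A x₂ y₃ * A x₃ y₁) - A x₁ y₁ * (A x₂ y₀ * A x₃ y₃ - A x₂ y₃ * A x₃ y₀)
        + A x₁ y₃ * (A x₂ y₀ * A x₃ y₁ - A x₂ y₁ * A x₃ y₀))
      - A x₀ y₃ *
      (A x₁ y₀ * (A x₂ y₁ * A x₃ y₂ - A x₂ y₂ * A x₃ y₁) - A x₁ y₁ * (A x₂ y₀ * A x₃ y₂ - A x₂ y₂ * A x₃ y₀)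
        + A x₁ y₂ * (A x₂ y₀ * A x₃ y₁ - A x₂ y₁ * A x₃ y₀)) = 0 := by
  by_contra h
  have hdet : (A.submatrix ![x₀, x₁, x₂, x₃] ![y₀, y₁, y₂, y₃]).det ≠ 0 := by
    rw [det_fin_four]
    exact h
  have h1 := Matrix.rank_of_isUnit _
    ((Matrix.isUnit_iff_isUnit_det _).2 (isUnit_iff_ne_zero.2 hdet))
  have h2 := A.rank_submatrix_le ![x₀, x₁, x₂, x₃] ![y₀, y₁, y₂, y₃]
  simp only [Fintype.card_fin] at h1
  omega

/-- A symmetric matrix of rank at most 3 whose core block has graph `P₃ ∪ K₂` has one of the three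
core blocks `coreMat i`, and is then determined by its columns in the core. -/
lemma exists_opt {ι : Type*} [Fintype ι] {A : Matrix ι ι (ZMod 2)} (hA : A.rank ≤ 3)
    (hs : A.IsSymm) (g : Fin 5 → ι)
    (hg : ∀ k l, k ≠ l → A (g k) (g l) = coreMat 0 k l) :
    ∃ i, (∀ k l, A (g k) (g l) = coreMat i k l) ∧
      ∀ u w, A u w = form i (fun k => A u (g k)) (fun k => A w (g k)) := by
  have m := minor_eq_zero hA
  have hs' : ∀ k w, A (g k) w = A w (g k) := fun k w => hs.apply w (g k)
  have h34 : A (g 3) (g 3) = 1 ∧ A (g 4) (g 4) = 1 := by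
    have := m (g 0) (g 1) (g 3) (g 4) (g 1) (g 2) (g 3) (g 4)
    simp [hg, coreMat] at this
    generalize A (g 3) (g 3) = a at this ⊢
    generalize A (g 4) (g 4) = b at this ⊢
    revert a b; decide
  have h012 : A (g 0) (g 0) * A (g 1) (g 1) * A (g 2) (g 2) = A (g 0) (g 0) + A (g 2) (g 2) := by
    have := m (g 0) (g 1) (g 2) (g 3) (g 0) (g 1) (g 2) (g 3)
    simp [hg, coreMat, h34] at this
    generalize A (g 0) (g 0) = a at this ⊢
    generalize A (g 1) (g 1) = b at this ⊢
    generalize A (g 2) (g 2) = c at this ⊢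
    revert a b c; decide
  have hcases : (A (g 0) (g 0) = 0 ∧ A (g 1) (g 1) = 0 ∧ A (g 2) (g 2) = 0) ∨
      (A (g 0) (g 0) = 0 ∧ A (g 1) (g 1) = 1 ∧ A (g 2) (g 2) = 0) ∨
      (A (g 0) (g 0) = 1 ∧ A (g 1) (g 1) = 0 ∧ A (g 2) (g 2) = 1) := by
    generalize A (g 0) (g 0) = a at h012 ⊢
    generalize A (g 1) (g 1) = b at h012 ⊢
    generalize A (g 2) (g 2) = c at h012 ⊢
    clear * - h012
    revert a b c; decide
  rcases hcases with h | h | h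
  · refine ⟨0, fun k l => ?_, fun u w => ?_⟩
    · by_cases hkl : k = l
      · subst hkl; fin_cases k <;> simp [coreMat, h, h34]
      · exact hg k l hkl
    · have := m (g 0) (g 1) (g 3) u (g 0) (g 1) (g 3) w
      simp [hg, coreMat, h34, h,
        hs' _ w] at this
      rw [form_zero]
      grind
  · refine ⟨1, fun k l => ?_, fun u w => ?_⟩
    · by_cases hkl : k = l
      · subst hkl; fin_cases k <;> simp [coreMat, h, h34]
      · rw [hg k l hkl]
        revert hkl
        fin_cases k <;> fin_cases l <;> simp [coreMat]
    · have := m (g 0) (g 1) (g 3) u (g 0) (g 1) (g 3) w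
      simp [hg, coreMat, h34, h,
        hs' _ w] at this
      rw [form_one]
      grind
  · refine ⟨2, fun k l => ?_, fun u w => ?_⟩
    · by_cases hkl : k = l
      · subst hkl; fin_cases k <;> simp [coreMat, h, h34]
      · rw [hg k l hkl]
        revert hkl
        fin_cases k <;> fin_cases l <;> simp [coreMat]
    · have := m (g 0) (g 2) (g 3) u (g 0) (g 2) (g 3) w
      simp [hg, coreMat, h34, h,
        hs' _ w] at this
      rw [form_two]
      grind

/-- Option `i` is obstructed inside the set `W` of vertices outside the core: by a single vertex
whose adjacency row `b v` to the core is incompatible, or by a pair whose adjacency `a v w` differs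
from the value forced by `form i`. -/
def Bad {O : Type*} (a : O → O → ZMod 2) (b : O → Fin 5 → ZMod 2) (i : Fin 3) (W : Set O) :
    Prop :=
  (∃ v ∈ W, ¬ Compat i (b v)) ∨ ∃ v ∈ W, ∃ w ∈ W, v ≠ w ∧ a v w ≠ form i (b v) (b w)

/-- Options `0` and `1` can only be told apart on pairs of vertices adjacent to core vertex `0`. -/
lemma form_zero_eq_form_one {r s : Fin 5 → ZMod 2} (h : ¬ (r 0 = 1 ∧ s 0 = 1)) :
    form 0 r s = form 1 r s := by
  rw [form_zero, form_one]
  rcases zmod2_cases (r 0) with h0 | h0 <;> rcases zmod2_cases (s 0) with h1 | h1 <;> simp_all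

lemma form_zero_ne_form_one {r s : Fin 5 → ZMod 2} (h : r 0 = 1) (h' : s 0 = 1) :
    form 0 r s ≠ form 1 r s := by
  rw [form_zero, form_one, h, h']
  generalize r 1 = x; generalize r 3 = y; generalize s 1 = z; generalize s 3 = t
  revert x y z t; decide

/-- Vertices compatible with all options are not adjacent to the middle of the path, and on such
vertices options `0` and `2` agree. -/
lemma form_zero_eq_form_two {r s : Fin 5 → ZMod 2} (hr : Compat 0 r) (hs : Compat 0 s)
    (hr' : Compat 2 r) (hs' : Compat 2 s) : form 0 r s = form 2 r s := by
  rw [compat_zero_iff] at hr hs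
  rw [compat_two_iff] at hr' hs'
  rw [form_zero, form_two, ← hr'.1, ← hs'.1, hr.1, hs.1]
  generalize r 0 = x; generalize r 3 = y; generalize s 0 = z; generalize s 3 = t
  revert x y z t; decide

/-- The combinatorial heart: if all three options are obstructed, three vertices suffice to
obstruct all of them. -/
lemma exists_triple {O : Type*} {a : O → O → ZMod 2} {b : O → Fin 5 → ZMod 2}
    (hbad : ∀ i, Bad a b i Set.univ) :
    ∃ x y z : O, ∀ i, Bad a b i {x, y, z} := by
  by_cases hc : ∃ v, ¬ Compat 0 (b v)
  · obtain ⟨v, hv⟩ := hc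
    have hv1 : ¬ Compat 1 (b v) := by rwa [compat_one_iff, ← compat_zero_iff]
    rcases hbad 2 with ⟨u, -, hu⟩ | ⟨u, -, w, -, hne, huw⟩
    · refine ⟨v, u, u, Fin.forall_fin_succ.2 ⟨.inl ⟨v, by simp, hv⟩, Fin.forall_fin_two.2
        ⟨.inl ⟨v, by simp, hv1⟩, .inl ⟨u, by simp, hu⟩⟩⟩⟩
    · refine ⟨v, u, w, Fin.forall_fin_succ.2 ⟨.inl ⟨v, by simp, hv⟩, Fin.forall_fin_two.2
        ⟨.inl ⟨v, by simp, hv1⟩, .inr ⟨u, by simp, w, by simp, hne, huw⟩⟩⟩⟩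
  push Not at hc
  have hc1 : ∀ v, Compat 1 (b v) := fun v => by
    rw [compat_one_iff, ← compat_zero_iff]; exact hc v
  -- A pair obstructing options 0 and 1 together needs at most one further vertex for option 2.
  have both : ∀ v w, v ≠ w → a v w ≠ form 0 (b v) (b w) → a v w ≠ form 1 (b v) (b w) →
      ∃ x y z : O, ∀ i, Bad a b i {x, y, z} := by
    intro v w hne h0 h1
    by_cases h2 : ∃ u, ¬ Compat 2 (b u)
    · obtain ⟨u, hu⟩ := h2
      exact ⟨v, w, u, Fin.forall_fin_succ.2 ⟨.inr ⟨v, by simp, w, by simp, hne, h0⟩,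
        Fin.forall_fin_two.2 ⟨.inr ⟨v, by simp, w, by simp, hne, h1⟩, .inl ⟨u, by simp, hu⟩⟩⟩⟩
    · push Not at h2
      exact ⟨v, w, w, Fin.forall_fin_succ.2 ⟨.inr ⟨v, by simp, w, by simp, hne, h0⟩,
        Fin.forall_fin_two.2 ⟨.inr ⟨v, by simp, w, by simp, hne, h1⟩,
          .inr ⟨v, by simp, w, by simp, hne,
            form_zero_eq_form_two (hc v) (hc w) (h2 v) (h2 w) ▸ h0⟩⟩⟩⟩
  -- Two obstructing pairs sharing a vertex need no further vertex for option 2.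
  have chain : ∀ v w x, v ≠ w → w ≠ x → a v w ≠ form 0 (b v) (b w) →
      a w x ≠ form 1 (b w) (b x) → ∃ x y z : O, ∀ i, Bad a b i {x, y, z} := by
    intro v w x hvw hwx h0 h1
    refine ⟨v, w, x, Fin.forall_fin_succ.2 ⟨.inr ⟨v, by simp, w, by simp, hvw, h0⟩,
        Fin.forall_fin_two.2 ⟨.inr ⟨w, by simp, x, by simp, hwx, h1⟩, ?_⟩⟩⟩
    by_cases hv : Compat 2 (b v)
    · by_cases hw : Compat 2 (b w)
      · exact .inr ⟨v, by simp, w, by simp, hvw,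
          form_zero_eq_form_two (hc v) (hc w) hv hw ▸ h0⟩
      · exact .inl ⟨w, by simp, hw⟩
    · exact .inl ⟨v, by simp, hv⟩
  rcases hbad 0 with ⟨v, -, hv⟩ | ⟨v, -, w, -, hvw, h0⟩
  · exact absurd (hc v) hv
  rcases hbad 1 with ⟨v, -, hv⟩ | ⟨x, -, y, -, hxy, h1⟩
  · exact absurd (hc1 v) hv
  by_cases hp : b v 0 = 1 ∧ b w 0 = 1
  swap
  · exact both v w hvw h0 (form_zero_eq_form_one hp ▸ h0)
  by_cases hp' : b x 0 = 1 ∧ b y 0 = 1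
  swap
  · exact both x y hxy ((form_zero_eq_form_one hp').symm ▸ h1) h1
  -- All of `v, w, x, y` are adjacent to core vertex 0, so every pair among them obstructs exactly
  -- one of the options 0 and 1; the pair `w, x` links the two given pairs.
  by_cases hwx : w = x
  · subst hwx; exact chain v w y hvw hxy h0 h1
  by_cases h : a w x = form 1 (b w) (b x)
  · have h' : a w x ≠ form 0 (b w) (b x) :=
      h ▸ (form_zero_ne_form_one hp.2 hp'.1).symm
    exact chain w x y hwx hxy h' h1
  · exact chain v w x hvw hwx h0 h

open Classical in
/-- The adjacency indicator of `G` with values in `F₂`. -/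
noncomputable def adjInd {V : Type*} (G : SimpleGraph V) (v w : V) : ZMod 2 :=
  if G.Adj v w then 1 else 0

lemma adjInd_comm {V : Type*} (G : SimpleGraph V) (v w : V) : adjInd G v w = adjInd G w v := by
  unfold adjInd
  congr 1
  exact propext (G.adj_comm v w)

lemma adjInd_ne_zero {V : Type*} (G : SimpleGraph V) (v w : V) :
    adjInd G v w ≠ 0 ↔ G.Adj v w := by
  simp [adjInd]

lemma eq_adjInd {V : Type*} {G : SimpleGraph V} {v w : V} {x : ZMod 2}
    (h : x ≠ 0 ↔ G.Adj v w) : x = adjInd G v w := by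
  rw [← adjInd_ne_zero] at h
  generalize adjInd G v w = y at h
  revert x y; decide

lemma adjInd_map {V : Type*} {G : SimpleGraph V} (f : P3unionK2 ↪g G) (i : Fin 3) {k l : Fin 5}
    (hkl : k ≠ l) : coreMat i k l = adjInd G (f k) (f l) := by
  apply eq_adjInd
  rw [f.map_adj_iff]
  revert hkl
  fin_cases i <;> fin_cases k <;> fin_cases l <;> simp [coreMat, P3unionK2]

/-- An option without obstruction yields a graph matrix of rank at most 3, namely the matrix of
`form i` on the core rows, where core vertices receive the rows of `coreMat i`. -/
lemma minRank_le {V : Type*} [Fintype V] (G : SimpleGraph V) (f : P3unionK2 ↪g G) (i : Fin 3)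
    (h1 : ∀ v ∉ Set.range f, Compat i fun k => adjInd G v (f k))
    (h2 : ∀ v ∉ Set.range f, ∀ w ∉ Set.range f, v ≠ w →
      adjInd G v w = form i (fun k => adjInd G v (f k)) (fun k => adjInd G w (f k))) :
    minRank (ZMod 2) G ≤ 3 := by
  classical
  obtain ⟨R, hRf, hRo⟩ : ∃ R : V → Fin 5 → ZMod 2, (∀ k, R (f k) = coreMat i k) ∧
      ∀ v ∉ Set.range f, R v = fun k => adjInd G v (f k) := by
    refine ⟨fun v => if h : v ∈ Set.range f then coreMat i h.choose else
      fun k => adjInd G v (f k), fun k => ?_, fun v hv => dif_neg hv⟩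
    have hk : f k ∈ Set.range f := ⟨k, rfl⟩
    have := f.injective hk.choose_spec
    simp only [dif_pos hk, this]
  let M : Matrix V V (ZMod 2) :=
    (Matrix.of fun v => leftCoord i (R v)) * (Matrix.of fun v => rightCoord i (R v))ᵀ
  have hM : ∀ v w, M v w = form i (R v) (R w) := fun v w => rfl
  have hrank : M.rank ≤ 3 :=
    (Matrix.rank_mul_le_left _ _).trans ((Matrix.rank_le_card_width _).trans (by simp))
  suffices hGM : IsGraphMatrix (ZMod 2) G M from
    (Nat.sInf_le (s := {r : ℕ | ∃ A : Matrix V V (ZMod 2),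
      IsGraphMatrix (ZMod 2) G A ∧ A.rank = r}) ⟨M, hGM, rfl⟩).trans hrank
  refine ⟨?_, fun v w hvw => ?_⟩
  · ext v w
    rw [Matrix.transpose_apply, hM, hM, form_comm]
  · rw [← adjInd_ne_zero, hM]
    suffices form i (R v) (R w) = adjInd G v w by rw [this]
    by_cases hv : v ∈ Set.range f <;> by_cases hw : w ∈ Set.range f
    · obtain ⟨k, rfl⟩ := hv
      obtain ⟨l, rfl⟩ := hw
      rw [hRf, hRf, compat_coreMat i k l, adjInd_map f i (fun h => hvw (congrArg f h))]
    · obtain ⟨k, rfl⟩ := hv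
      rw [form_comm, hRf, hRo w hw, h1 w hw k, adjInd_comm]
    · obtain ⟨k, rfl⟩ := hw
      rw [hRf, hRo v hv, h1 v hv k]
    · rw [hRo v hv, hRo w hw, h2 v hv w hw hvw]

lemma exists_matrix {V : Type*} [Fintype V] {G : SimpleGraph V} {n : ℕ}
    (h : minRank (ZMod 2) G ≤ n) :
    ∃ A : Matrix V V (ZMod 2), IsGraphMatrix (ZMod 2) G A ∧ A.rank ≤ n := by
  have hne : {r : ℕ | ∃ A : Matrix V V (ZMod 2),
      IsGraphMatrix (ZMod 2) G A ∧ A.rank = r}.Nonempty :=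
    ⟨_, Matrix.of (adjInd G), ⟨by ext v w; exact adjInd_comm G w v,
      fun v w _ => adjInd_ne_zero G v w⟩, rfl⟩
  obtain ⟨A, hA, hr⟩ := Nat.sInf_mem hne
  exact ⟨A, hA, hr.trans_le h⟩

/-- If `G - z` has minimum rank at most 3, some option has no obstruction avoiding `z`. -/
lemma exists_good {V : Type*} [Fintype V] [DecidableEq V] (G : SimpleGraph V)
    (f : P3unionK2 ↪g G) (z : V) (hz : z ∉ Set.range f)
    (h : minRank (ZMod 2) (deleteVert G z) ≤ 3) :
    ∃ i, (∀ v ∉ Set.range f, v ≠ z → Compat i fun k => adjInd G v (f k)) ∧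
      ∀ v ∉ Set.range f, v ≠ z → ∀ w ∉ Set.range f, w ≠ z → v ≠ w →
        adjInd G v w = form i (fun k => adjInd G v (f k)) (fun k => adjInd G w (f k)) := by
  obtain ⟨A, ⟨hs, hA⟩, hr⟩ := exists_matrix h
  have hval : ∀ v w : {u // u ≠ z}, v ≠ w → A v w = adjInd G v w := fun v w hvw =>
    eq_adjInd (hA v w hvw)
  let g : Fin 5 → {u // u ≠ z} := fun k => ⟨f k, fun hk => hz ⟨k, hk⟩⟩
  have hg : ∀ k l, k ≠ l → A (g k) (g l) = coreMat 0 k l := fun k l hkl => by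
    rw [hval _ _ fun h => hkl (f.injective (congrArg Subtype.val h)), adjInd_map f 0 hkl]
  obtain ⟨i, hD, hform⟩ := exists_opt hr hs g hg
  have hrow : ∀ v ∉ Set.range f, ∀ hvz : v ≠ z,
      (fun k => A ⟨v, hvz⟩ (g k)) = fun k => adjInd G v (f k) := fun v hv hvz => by
    ext k
    exact hval _ _ fun h => hv ⟨k, (congrArg Subtype.val h).symm⟩
  refine ⟨i, fun v hv hvz k => ?_, fun v hv hvz w hw hwz hvw => ?_⟩
  · rw [← hrow v hv hvz]
    have := hform ⟨v, hvz⟩ (g k)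
    rw [funext (hD k)] at this
    exact this.symm
  · rw [← hrow v hv hvz, ← hrow w hw hwz, ← hform]
    exact (hval ⟨v, hvz⟩ ⟨w, hwz⟩ fun h => hvw (congrArg Subtype.val h)).symm

end P3K2

open P3K2 in
/-- If `G ∈ F₄(F₂, P₃ ∪ K₂)`, then `G` has at most 8 vertices. -/
theorem card_le_eight_of_forbRel_P3unionK2 {V : Type*} [Fintype V] [DecidableEq V]
    (G : SimpleGraph V) (h : MemForbRel (ZMod 2) 4 P3unionK2 G) :
    Fintype.card V ≤ 8 := by
  obtain ⟨hK, f, hf⟩ := h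
  have hbad : ∀ i, Bad (O := {v // v ∉ Set.range f}) (fun v w => adjInd G v w)
      (fun v k => adjInd G v (f k)) i Set.univ := by
    intro i
    by_contra hb
    simp only [Bad, not_or, not_exists, not_and, not_not] at hb
    have := minRank_le G f i (fun v hv => hb.1 ⟨v, hv⟩ trivial)
      (fun v hv w hw hvw => hb.2 ⟨v, hv⟩ trivial ⟨w, hw⟩ trivial
        fun h => hvw (congrArg Subtype.val h))
    omega
  obtain ⟨x, y, t, hxyt⟩ := exists_triple hbad
  by_contra hcard
  -- With nine vertices, some `z` lies outside the core and the triple, so deleting `z` keeps every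
  -- option obstructed.
  obtain ⟨z, hz⟩ : ∃ z, z ∉ Finset.univ.image f ∪ {x.1, y.1, t.1} := by
    by_contra hall
    push Not at hall
    have h1 : Fintype.card V ≤ (Finset.univ.image f ∪ {x.1, y.1, t.1}).card :=
      Finset.card_le_card fun v _ => hall v
    have h2 := Finset.card_union_le (Finset.univ.image f) {x.1, y.1, t.1}
    have h3 : (Finset.univ.image f).card ≤ 5 := Finset.card_image_le
    have h4 : ({x.1, y.1, t.1} : Finset V).card ≤ 3 := Finset.card_le_three
    omega
  have hzf : z ∉ Set.range f := by
    rintro ⟨k, rfl⟩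
    simp at hz
  have hW : ∀ v ∈ ({x, y, t} : Set {v // v ∉ Set.range f}), v.1 ≠ z := by
    rintro v hv rfl
    apply hz
    simp only [Set.mem_insert_iff, Set.mem_singleton_iff] at hv
    rcases hv with rfl | rfl | rfl <;> simp
  obtain ⟨i, hi1, hi2⟩ := exists_good G f z hzf (by have := hf z hzf; omega)
  rcases hxyt i with ⟨v, hv, hb⟩ | ⟨v, hv, w, hw, hne, hb⟩
  · exact hb (hi1 v v.2 (hW v hv))
  · exact hb (hi2 v v.2 (hW v hv) w w.2 (hW w hw) fun h => hne (Subtype.ext h))
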